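/- Let G = (V,E) be a finite simple connected graph and let W ⊆ V be a vertex cut with |W| = k that is also an independent set in G, such that G − W has exactly two connected components. Let G₁ = (V₁,E₁) and G₂ = (V₂,E₂) be the split components of G at W, i.e., subgraphs of G with V₁ ∪ V₂ = V, V₁ ∩ V₂ = W, E₁ ∪ E₂ = E and E₁ ∩ E₂ = ∅. Then N(G,x) = N(G₁,x) + N(G₂,x) − Σ_{U ⊆ W} A_U + Σ_{∅ ≠ U ⊆ W} (−1)^{|U|+1} ((1+x)^{|∩_{u∈U} N_{G₁}(u)|} − 1)·((1+x)^{|∩_{u∈U} N_{G₂}(u)|} − 1), where A_U = x^{|U|} if ∩_{u∈U} N_{G₁}(u) ≠ ∅ and ∩_{u∈U} N_{G₂}(u) ≠ ∅, and A_U = 0 otherwise. -/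

import Mathlib

open Classical in
/-- The neighborhood polynomial of a finite simple graph `G`, evaluated at `x`:
the generating function of the family of vertex subsets having a common neighbor. -/
noncomputable def nhdPoly {V : Type*} [Fintype V] (G : SimpleGraph V) (x : ℝ) : ℝ :=
  ∑ A ∈ Finset.univ.filter (fun A : Finset V => ∃ w : V, ∀ a ∈ A, G.Adj w a), x ^ A.card

/-!
A set `A` with a common neighbor `w` in `G₁ ⊔ G₂` either lies in the neighborhood of `w` in one of
the `Gᵢ`, or meets both of these neighborhoods, which forces `w ∈ W`. The sets of the first kind
are counted by `N(G₁) + N(G₂)`, corrected by the sets with a common neighbor in each `Gᵢ`; these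
are subsets of `W`. As `W` is independent, the sets of the second kind are not in `𝒩(G₁) ∪ 𝒩(G₂)`,
and they are counted by inclusion-exclusion over the possible `w`: a set is of the second kind for
every `w ∈ U` exactly when it is the union of a nonempty set of common `G₁`-neighbors of `U` and
a nonempty set of common `G₂`-neighbors of `U`.
-/

section CrossingSubsets

open Finset

variable {α ι R : Type*} [DecidableEq α]

/-- The subsets of `P ∪ Q` that meet both `P` and `Q`. With `P` and `Q` the neighborhoods of a
vertex in two graphs, these are the faces that its neighborhood in their union creates. -/
def crossingSubsets (P Q : Finset α) : Finset (Finset α) :=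
  {A ∈ (P ∪ Q).powerset | (A ∩ P).Nonempty ∧ (A ∩ Q).Nonempty}

theorem mem_crossingSubsets {P Q A : Finset α} :
    A ∈ crossingSubsets P Q ↔ A ⊆ P ∪ Q ∧ (A ∩ P).Nonempty ∧ (A ∩ Q).Nonempty := by
  rw [crossingSubsets, mem_filter, mem_powerset]

theorem crossingSubsets_comm (P Q : Finset α) : crossingSubsets P Q = crossingSubsets Q P := by
  simp only [crossingSubsets, union_comm, and_comm]

theorem sum_pow_card_powerset_erase_empty [CommRing R] (P : Finset α) (x : R) :
    ∑ A ∈ P.powerset.erase ∅, x ^ #A = (1 + x) ^ #P - 1 := by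
  have hpowerset : ∑ A ∈ P.powerset, x ^ #A = (1 + x) ^ #P := by
    simpa only [one_pow, mul_one, add_comm] using sum_pow_mul_eq_add_pow x 1 P
  rw [sum_erase_eq_sub (empty_mem_powerset P), hpowerset, card_empty, pow_zero]

theorem sum_pow_card_crossingSubsets [CommRing R] {P Q : Finset α} (h : Disjoint P Q) (x : R) :
    ∑ A ∈ crossingSubsets P Q, x ^ #A = ((1 + x) ^ #P - 1) * ((1 + x) ^ #Q - 1) := by
  have hsplit {A : Finset α} (hA : A ∈ crossingSubsets P Q) : (A ∩ P) ∪ (A ∩ Q) = A := by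
    rw [← inter_union_distrib_left, inter_eq_left.2 (mem_crossingSubsets.1 hA).1]
  rw [← sum_pow_card_powerset_erase_empty P, ← sum_pow_card_powerset_erase_empty Q,
    sum_mul_sum, ← sum_product']
  refine sum_nbij' (fun A => (A ∩ P, A ∩ Q)) (fun B => B.1 ∪ B.2) ?_ ?_ (fun A => hsplit) ?_ ?_
  · intro A hA
    obtain ⟨-, hP, hQ⟩ := mem_crossingSubsets.1 hA
    simp only [mem_product, mem_erase, mem_powerset]
    exact ⟨⟨hP.ne_empty, inter_subset_right⟩, hQ.ne_empty, inter_subset_right⟩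
  · rintro ⟨B, C⟩ hBC
    simp only [mem_product, mem_erase, mem_powerset, ← nonempty_iff_ne_empty] at hBC
    obtain ⟨⟨hB, hBP⟩, hC, hCQ⟩ := hBC
    exact mem_crossingSubsets.2 ⟨union_subset_union hBP hCQ,
      hB.mono (subset_inter subset_union_left hBP), hC.mono (subset_inter subset_union_right hCQ)⟩
  · rintro ⟨B, C⟩ hBC
    simp only [mem_product, mem_erase, mem_powerset] at hBC
    obtain ⟨⟨-, hBP⟩, -, hCQ⟩ := hBC
    have hCP : C ∩ P = ∅ := disjoint_iff_inter_eq_empty.1 (h.symm.mono_left hCQ)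
    have hBQ : B ∩ Q = ∅ := disjoint_iff_inter_eq_empty.1 (h.mono_left hBP)
    simp only [union_inter_distrib_right, hCP, hBQ, inter_eq_left.2 hBP, inter_eq_left.2 hCQ,
      union_empty, empty_union]
  · intro A hA
    rw [← pow_add, ← card_union_of_disjoint (h.mono inter_subset_right inter_subset_right),
      hsplit hA]

theorem inf'_crossingSubsets [Fintype α] {s : Finset ι} (hs : s.Nonempty) {P Q : ι → Finset α}
    (h : ∀ i ∈ s, ∀ j ∈ s, Disjoint (P i) (Q j)) :
    s.inf' hs (fun i => crossingSubsets (P i) (Q i)) = crossingSubsets (s.inf P) (s.inf Q) := by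
  rw [inf'_eq_inf]
  obtain ⟨i, hi⟩ := hs
  have hPQ {a : α} {j k : ι} (hj : j ∈ s) (hk : k ∈ s) (ha : a ∈ P j) : a ∉ Q k :=
    disjoint_left.1 (h j hj k hk) ha
  ext A
  simp only [mem_crossingSubsets, mem_inf, subset_iff, mem_union, Finset.Nonempty, mem_inter]
  constructor
  · intro hA
    have hinf {a : α} (ha : a ∈ A) : (a ∈ P i → ∀ j ∈ s, a ∈ P j) ∧ (a ∈ Q i → ∀ j ∈ s, a ∈ Q j) :=
      ⟨fun haP j hj => ((hA j hj).1 ha).resolve_right (hPQ hi hj haP),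
        fun haQ j hj => ((hA j hj).1 ha).resolve_left fun haP => hPQ hj hi haP haQ⟩
    obtain ⟨hsub, ⟨a, ha, haP⟩, b, hb, hbQ⟩ := hA i hi
    exact ⟨fun c hc => (hsub hc).imp (hinf hc).1 (hinf hc).2,
      ⟨a, ha, (hinf ha).1 haP⟩, b, hb, (hinf hb).2 hbQ⟩
  · rintro ⟨hsub, ⟨a, ha, haP⟩, b, hb, hbQ⟩ j hj
    exact ⟨fun c hc => (hsub hc).imp (· j hj) (· j hj), ⟨a, ha, haP j hj⟩, b, hb, hbQ j hj⟩

theorem sum_pow_card_biUnion_crossingSubsets [Fintype α] [CommRing R] {s : Finset ι}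
    {P Q : ι → Finset α} (h : ∀ i ∈ s, ∀ j ∈ s, Disjoint (P i) (Q j)) (x : R) :
    ∑ A ∈ s.biUnion (fun i => crossingSubsets (P i) (Q i)), x ^ #A =
      ∑ t ∈ s.powerset with t.Nonempty,
        (-1) ^ (#t + 1) * ((1 + x) ^ #(t.inf P) - 1) * ((1 + x) ^ #(t.inf Q) - 1) := by
  rw [inclusion_exclusion_sum_biUnion, ← sum_coe_sort {t ∈ s.powerset | t.Nonempty}]
  refine sum_congr rfl fun ⟨t, ht⟩ _ => ?_
  obtain ⟨hts, i, hi⟩ := mem_filter.1 ht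
  rw [mem_powerset] at hts
  have hdisj : Disjoint (t.inf P) (t.inf Q) :=
    (h i (hts hi) i (hts hi)).mono (inf_le hi) (inf_le hi)
  rw [inf'_crossingSubsets _ fun j hj k hk => h j (hts hj) k (hts hk),
    sum_pow_card_crossingSubsets hdisj, zsmul_eq_mul, mul_assoc]
  norm_cast

end CrossingSubsets

section NeighborhoodComplex

open Finset

variable {V : Type*} [Fintype V] {G G₁ G₂ : SimpleGraph V} {W : Finset V}

open Classical in
/-- The neighborhood complex `𝒩(G)`: the family of vertex subsets having a common neighbor. -/
noncomputable def nhdComplex (G : SimpleGraph V) : Finset (Finset V) :=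
  {A | ∃ w, ∀ a ∈ A, G.Adj w a}

theorem mem_nhdComplex {A : Finset V} : A ∈ nhdComplex G ↔ ∃ w, ∀ a ∈ A, G.Adj w a := by
  simp only [nhdComplex, mem_filter_univ]

theorem nhdPoly_eq_sum_nhdComplex (G : SimpleGraph V) (x : ℝ) :
    nhdPoly G x = ∑ A ∈ nhdComplex G, x ^ #A :=
  rfl

theorem card_inf_neighborFinset [DecidableEq V] (G : SimpleGraph V) [DecidableRel G.Adj]
    (U : Finset V) :
    #(U.inf fun u => G.neighborFinset u) = Nat.card ↥(⋂ u ∈ U, G.neighborSet u) := by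
  rw [Nat.card_coe_set_eq, ← Set.ncard_coe_finset]
  congr 1
  ext a
  simp only [mem_coe, mem_inf, SimpleGraph.mem_neighborFinset, Set.mem_iInter,
    SimpleGraph.mem_neighborSet]

theorem mem_nhdComplex_iff_nonempty_iInter {U : Finset V} :
    U ∈ nhdComplex G ↔ (⋂ u ∈ U, G.neighborSet u).Nonempty := by
  simp only [mem_nhdComplex, Set.Nonempty, Set.mem_iInter, SimpleGraph.mem_neighborSet,
    SimpleGraph.adj_comm]

open Classical in
theorem nhdComplex_inter (hW : G₁.support ∩ G₂.support ⊆ W) :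
    nhdComplex G₁ ∩ nhdComplex G₂ =
      {U ∈ W.powerset | (⋂ u ∈ U, G₁.neighborSet u).Nonempty ∧
        (⋂ u ∈ U, G₂.neighborSet u).Nonempty} := by
  ext U
  simp only [mem_inter, mem_filter, mem_powerset, ← mem_nhdComplex_iff_nonempty_iInter,
    iff_and_self, mem_nhdComplex]
  rintro ⟨⟨v, hv⟩, w, hw⟩ u hu
  exact hW ⟨(hv u hu).mem_support_right, (hw u hu).mem_support_right⟩

theorem nhdComplex_mono (h : G₁ ≤ G₂) : nhdComplex G₁ ⊆ nhdComplex G₂ := by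
  intro A hA
  obtain ⟨w, hw⟩ := mem_nhdComplex.1 hA
  exact mem_nhdComplex.2 ⟨w, fun a ha => h (hw a ha)⟩

theorem nhdComplex_sup [DecidableEq V] [DecidableRel G₁.Adj] [DecidableRel G₂.Adj]
    (hW : G₁.support ∩ G₂.support ⊆ W) :
    nhdComplex (G₁ ⊔ G₂) = (nhdComplex G₁ ∪ nhdComplex G₂) ∪
      W.biUnion fun u => crossingSubsets (G₁.neighborFinset u) (G₂.neighborFinset u) := by
  refine Subset.antisymm (fun A hA => ?_)
    (union_subset (union_subset (nhdComplex_mono le_sup_left) (nhdComplex_mono le_sup_right)) ?_)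
  · obtain ⟨w, hw⟩ := mem_nhdComplex.1 hA
    simp only [mem_union, mem_biUnion]
    by_cases h₁ : ∀ a ∈ A, G₁.Adj w a
    · exact .inl (.inl (mem_nhdComplex.2 ⟨w, h₁⟩))
    by_cases h₂ : ∀ a ∈ A, G₂.Adj w a
    · exact .inl (.inr (mem_nhdComplex.2 ⟨w, h₂⟩))
    push Not at h₁ h₂
    obtain ⟨a, ha, ha₁⟩ := h₁
    obtain ⟨b, hb, hb₂⟩ := h₂
    have hwa : G₂.Adj w a := (hw a ha).resolve_left ha₁
    have hwb : G₁.Adj w b := (hw b hb).resolve_right hb₂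
    refine .inr ⟨w, hW ⟨hwb.mem_support_left, hwa.mem_support_left⟩,
      mem_crossingSubsets.2 ⟨fun c hc => ?_, ⟨b, ?_⟩, a, ?_⟩⟩
    · simpa only [SimpleGraph.sup_adj, mem_union, SimpleGraph.mem_neighborFinset] using hw c hc
    · simpa only [mem_inter, SimpleGraph.mem_neighborFinset] using ⟨hb, hwb⟩
    · simpa only [mem_inter, SimpleGraph.mem_neighborFinset] using ⟨ha, hwa⟩
  · refine biUnion_subset.2 fun u _ A hA => mem_nhdComplex.2 ⟨u, fun a ha => ?_⟩
    simpa only [SimpleGraph.sup_adj, mem_union, SimpleGraph.mem_neighborFinset]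
      using (mem_crossingSubsets.1 hA).1 ha

theorem disjoint_neighborFinset_of_isIndepSet [DecidableRel G₁.Adj] [DecidableRel G₂.Adj]
    (hW : G₁.support ∩ G₂.support ⊆ W) (hindep : G₂.IsIndepSet W) (w : V) {u : V} (hu : u ∈ W) :
    Disjoint (G₁.neighborFinset w) (G₂.neighborFinset u) := by
  refine disjoint_left.2 fun a ha₁ ha₂ => ?_
  rw [SimpleGraph.mem_neighborFinset] at ha₁ ha₂
  have haW : a ∈ W := hW ⟨ha₁.mem_support_right, ha₂.mem_support_right⟩
  exact hindep hu haW ha₂.ne ha₂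

theorem disjoint_nhdComplex_crossingSubsets [DecidableEq V] [DecidableRel G.Adj] {P Q : Finset V}
    (h : ∀ w, Disjoint (G.neighborFinset w) Q) :
    Disjoint (nhdComplex G) (crossingSubsets P Q) := by
  refine disjoint_left.2 fun A hA hPQ => ?_
  obtain ⟨w, hw⟩ := mem_nhdComplex.1 hA
  obtain ⟨-, -, a, ha⟩ := mem_crossingSubsets.1 hPQ
  rw [mem_inter] at ha
  exact disjoint_left.1 (h w) ((G.mem_neighborFinset w a).2 (hw a ha.1)) ha.2

theorem disjoint_nhdComplex_biUnion_crossingSubsets [DecidableEq V] [DecidableRel G₁.Adj]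
    [DecidableRel G₂.Adj] (hW : G₁.support ∩ G₂.support ⊆ W)
    (hindep₁ : G₁.IsIndepSet W) (hindep₂ : G₂.IsIndepSet W) :
    Disjoint (nhdComplex G₁ ∪ nhdComplex G₂)
      (W.biUnion fun u => crossingSubsets (G₁.neighborFinset u) (G₂.neighborFinset u)) := by
  refine (disjoint_biUnion_right _ _ _).2 fun u hu => disjoint_union_left.2 ⟨?_, ?_⟩
  · exact disjoint_nhdComplex_crossingSubsets fun w =>
      disjoint_neighborFinset_of_isIndepSet hW hindep₂ w hu
  · rw [crossingSubsets_comm]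
    rw [Set.inter_comm] at hW
    exact disjoint_nhdComplex_crossingSubsets fun w =>
      disjoint_neighborFinset_of_isIndepSet hW hindep₁ w hu

end NeighborhoodComplex

open Classical in
theorem nhdPoly_independent_vertex_cut_general {V : Type*} [Fintype V] {G₁ G₂ : SimpleGraph V}
    {W : Finset V} (hW : G₁.support ∩ G₂.support ⊆ W) (hindep : (G₁ ⊔ G₂).IsIndepSet W) (x : ℝ) :
    nhdPoly (G₁ ⊔ G₂) x =
      nhdPoly G₁ x + nhdPoly G₂ x
        - (∑ U ∈ W.powerset,
            if (⋂ u ∈ U, G₁.neighborSet u).Nonempty ∧ (⋂ u ∈ U, G₂.neighborSet u).Nonempty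
            then x ^ U.card else 0)
        + ∑ U ∈ W.powerset.filter (· ≠ ∅),
            (-1 : ℝ) ^ (U.card + 1)
              * ((1 + x) ^ (Nat.card ↥(⋂ u ∈ U, G₁.neighborSet u)) - 1)
              * ((1 + x) ^ (Nat.card ↥(⋂ u ∈ U, G₂.neighborSet u)) - 1) := by
  have hindep₁ : G₁.IsIndepSet W := hindep.mono' fun _ _ h hadj => h (.inl hadj)
  have hindep₂ : G₂.IsIndepSet W := hindep.mono' fun _ _ h hadj => h (.inr hadj)
  have hcross := sum_pow_card_biUnion_crossingSubsets
    (fun w _ u hu => disjoint_neighborFinset_of_isIndepSet hW hindep₂ w hu) x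
  simp only [card_inf_neighborFinset, Finset.nonempty_iff_ne_empty] at hcross
  simp only [nhdPoly_eq_sum_nhdComplex]
  rw [nhdComplex_sup hW,
    Finset.sum_union (disjoint_nhdComplex_biUnion_crossingSubsets hW hindep₁ hindep₂), hcross,
    ← Finset.sum_filter, ← nhdComplex_inter hW, ← Finset.sum_union_inter, add_sub_cancel_right]

open Classical in
/-- Splitting formula for the neighborhood polynomial at an independent vertex cut `W`
(with `|W| = k`) of a connected graph `G` such that `G − W` has exactly two connected
components.  The split components `G₁`, `G₂` are modelled as spanning-type subgraphs of
`G` whose edges lie inside the vertex sets `V₁`, `V₂` with `V₁ ∪ V₂ = V`, `V₁ ∩ V₂ = W`,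
`E₁ ∪ E₂ = E`, `E₁ ∩ E₂ = ∅` (vertices outside `Vᵢ` are isolated in `Gᵢ` and do not
affect the neighborhood complex). -/
theorem nhdPoly_independent_vertex_cut {V : Type*} [Fintype V]
    (G G₁ G₂ : SimpleGraph V) (V₁ V₂ : Set V) (W : Finset V) (k : ℕ)
    (hconn : G.Connected)
    (hk : W.card = k)
    (hindep : ∀ a ∈ W, ∀ b ∈ W, ¬ G.Adj a b)
    (hcut : Nat.card (SimpleGraph.induce ((↑W : Set V)ᶜ) G).ConnectedComponent = 2)
    (hG₁ : G₁ ≤ G) (hG₂ : G₂ ≤ G)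
    (hG₁V : ∀ a b, G₁.Adj a b → a ∈ V₁ ∧ b ∈ V₁)
    (hG₂V : ∀ a b, G₂.Adj a b → a ∈ V₂ ∧ b ∈ V₂)
    (hVunion : V₁ ∪ V₂ = Set.univ) (hVinter : V₁ ∩ V₂ = ↑W)
    (hEunion : G₁.edgeSet ∪ G₂.edgeSet = G.edgeSet)
    (hEinter : G₁.edgeSet ∩ G₂.edgeSet = ∅) (x : ℝ) :
    nhdPoly G x =
      nhdPoly G₁ x + nhdPoly G₂ x
        - (∑ U ∈ W.powerset,
            if (⋂ u ∈ U, G₁.neighborSet u).Nonempty ∧ (⋂ u ∈ U, G₂.neighborSet u).Nonempty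
            then x ^ U.card else 0)
        + ∑ U ∈ W.powerset.filter (· ≠ ∅),
            (-1 : ℝ) ^ (U.card + 1)
              * ((1 + x) ^ (Nat.card ↥(⋂ u ∈ U, G₁.neighborSet u)) - 1)
              * ((1 + x) ^ (Nat.card ↥(⋂ u ∈ U, G₂.neighborSet u)) - 1) := by
  obtain rfl : G₁ ⊔ G₂ = G := by rw [← SimpleGraph.edgeSet_inj, SimpleGraph.edgeSet_sup, hEunion]
  have hsupp : G₁.support ∩ G₂.support ⊆ W := by
    rintro v ⟨⟨a, ha⟩, b, hb⟩
    exact hVinter ▸ ⟨(hG₁V v a ha).1, (hG₂V v b hb).1⟩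
  exact nhdPoly_independent_vertex_cut_general hsupp (fun a ha b hb _ => hindep a ha b hb) x
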